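/- arXiv:2504.00377 — 2 statements merged into one kernel-verified Lean document; each statement's English description precedes it below -/
import Mathlib

section
/- Let H ⊆ Ω be an open invariant subset. If (Ω, T₁, T₂) satisfies the generalised matrix condition {(1 − (T₁)_*)f + (1 − (T₂)_*)g : f, g ∈ C_c(Ω, ℤ)} ∩ C_c(Ω, ℕ) = {0}, then (H, T₁|_H, T₂|_H) satisfies the generalised matrix condition {(1 − (T₁|_H)_*)f + (1 − (T₂|_H)_*)g : f, g ∈ C_c(H, ℤ)} ∩ C_c(H, ℕ) = {0}. -/
/-!
Extension by zero `h ↦ extend Subtype.val h 0` maps `C_c(H, ℤ)` to `C_c(Ω, ℤ)`, because `H` is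
open, and preserves nonnegativity.  It intertwines `(T|_H)_*` with `T_*` (`Tstar_extend`): over a
point of `H` the whole fibre of `T` lies in `H`, and over a point outside `H` the fibre misses `H`.
Hence a nonnegative element of the matrix set of `H` extends to a nonnegative element of the matrix
set of `Ω`, which vanishes by hypothesis.
-/

open Set Function

/-- `(T_* h)(y) = Σ_{x : T x = y} h(x)` (a `finsum`, which is `0` if the sum is not
finitely supported). -/
noncomputable def Tstar {X Y : Type*} (T : X → Y) (h : X → ℤ) : Y → ℤ :=
  fun y => ∑ᶠ x ∈ T ⁻¹' {y}, h x

/-- The set `{(1 − (S₁)_*) f + (1 − (S₂)_*) g : f, g ∈ C_c(X, ℤ)}`. -/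
def MSet {X : Type*} [TopologicalSpace X] (S₁ S₂ : X → X) : Set (X → ℤ) :=
  {k | ∃ f g : X → ℤ, Continuous f ∧ HasCompactSupport f ∧
    Continuous g ∧ HasCompactSupport g ∧
    k = (f - Tstar S₁ f) + (g - Tstar S₂ g)}

/-- `C_c(X, ℕ)`: continuous, compactly supported, nonnegative integer-valued functions. -/
def CcNN (X : Type*) [TopologicalSpace X] : Set (X → ℤ) :=
  {k | Continuous k ∧ HasCompactSupport k ∧ ∀ x, 0 ≤ k x}

lemma continuous_extend {X : Type*} [TopologicalSpace X] [T2Space X] {H : Set X}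
    (hH : IsOpen H) {h : H → ℤ} (hc : Continuous h) (hs : HasCompactSupport h) :
    Continuous (extend Subtype.val h 0) :=
  hs.continuous_extend_zero hH hc

lemma hasCompactSupport_extend {X : Type*} [TopologicalSpace X] [T2Space X] {H : Set X}
    {h : H → ℤ} (hs : HasCompactSupport h) :
    HasCompactSupport (extend Subtype.val h 0) :=
  hs.extend_zero continuous_subtype_val

/-- Extension by zero intertwines the pushforwards of `T|_H` and of `T`. -/
lemma Tstar_extend {X : Type*} {H : Set X} (T : X → X) (hm : MapsTo T H H)
    (hinv : T ⁻¹' H ⊆ H) (h : H → ℤ) :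
    Tstar T (extend Subtype.val h 0) = extend Subtype.val (Tstar (hm.restrict T H H) h) 0 := by
  funext y
  by_cases hy : y ∈ H
  · have hfib : T ⁻¹' {y} = Subtype.val '' ((hm.restrict T H H) ⁻¹' {(⟨y, hy⟩ : H)}) := by
      ext x
      constructor
      · intro hx
        have hxy : T x = y := hx
        have hxH : x ∈ H := hinv (by simpa [hxy] using hy)
        exact ⟨⟨x, hxH⟩, Subtype.ext hxy, rfl⟩
      · rintro ⟨a, ha, rfl⟩
        exact congrArg Subtype.val ha
    rw [show extend Subtype.val (Tstar (hm.restrict T H H) h) 0 y =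
      Tstar (hm.restrict T H H) h ⟨y, hy⟩ from
      Subtype.val_injective.extend_apply _ _ (⟨y, hy⟩ : H)]
    unfold Tstar
    rw [hfib, finsum_mem_image Subtype.val_injective.injOn]
    simp only [Subtype.val_injective.extend_apply]
  · rw [extend_apply' _ _ _ (by rintro ⟨a, rfl⟩; exact hy a.2)]
    refine finsum_mem_eq_zero_of_forall_eq_zero fun x hx => ?_
    refine extend_apply' _ _ _ ?_
    rintro ⟨a, rfl⟩
    have hxy : T a = y := hx
    exact hy (hxy ▸ hm a.2)

/-- Let `H ⊆ Ω` be an open invariant subset.  If `(Ω, T₁, T₂)`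
satisfies the generalised matrix condition
`{(1 − (T₁)_*) f + (1 − (T₂)_*) g : f, g ∈ C_c(Ω, ℤ)} ∩ C_c(Ω, ℕ) = {0}`, then
`(H, T₁|_H, T₂|_H)` satisfies the generalised matrix condition. -/
theorem stmt12 {Ω : Type*} [TopologicalSpace Ω] [SecondCountableTopology Ω]
    [TotallyDisconnectedSpace Ω] [LocallyCompactSpace Ω] [T2Space Ω]
    (T₁ T₂ : Ω → Ω)
    (hs₁ : Function.Surjective T₁) (hs₂ : Function.Surjective T₂)
    (hl₁ : IsLocalHomeomorph T₁) (hl₂ : IsLocalHomeomorph T₂)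
    (hcomm : ∀ x, T₁ (T₂ x) = T₂ (T₁ x))
    (H : Set Ω) (hHo : IsOpen H)
    (hm₁ : Set.MapsTo T₁ H H) (hm₂ : Set.MapsTo T₂ H H)
    (hinv₁' : T₁ ⁻¹' H ⊆ H) (hinv₂' : T₂ ⁻¹' H ⊆ H)
    (hM : MSet T₁ T₂ ∩ CcNN Ω = {0}) :
    MSet (Set.MapsTo.restrict T₁ H H hm₁) (Set.MapsTo.restrict T₂ H H hm₂) ∩
      CcNN ↥H = {0} := by
  ext k
  rw [mem_singleton_iff]
  constructor
  · rintro ⟨⟨f, g, hf, hfs, hg, hgs, hk⟩, hkc, hks, hk0⟩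
    have hmem : extend Subtype.val k 0 ∈ MSet T₁ T₂ ∩ CcNN Ω := by
      refine ⟨⟨extend Subtype.val f 0, extend Subtype.val g 0, continuous_extend hHo hf hfs,
        hasCompactSupport_extend hfs, continuous_extend hHo hg hgs,
        hasCompactSupport_extend hgs, ?_⟩, continuous_extend hHo hkc hks,
        hasCompactSupport_extend hks, fun x => ?_⟩
      · rw [Tstar_extend T₁ hm₁ hinv₁', Tstar_extend T₂ hm₂ hinv₂']
        funext x
        by_cases hx : x ∈ H
        · lift x to H using hx
          simp only [Pi.add_apply, Pi.sub_apply, Subtype.val_injective.extend_apply]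
          exact congrFun hk x
        · have hx' : ¬ ∃ a : H, a.1 = x := by rintro ⟨a, rfl⟩; exact hx a.2
          simp [extend_apply' _ _ _ hx']
      · by_cases hx : x ∈ H
        · lift x to H using hx
          rw [Subtype.val_injective.extend_apply]
          exact hk0 x
        · have hx' : ¬ ∃ a : H, a.1 = x := by rintro ⟨a, rfl⟩; exact hx a.2
          simp [extend_apply' _ _ _ hx']
    rw [hM, mem_singleton_iff] at hmem
    funext x
    have hx := congrFun hmem x
    rwa [Subtype.val_injective.extend_apply] at hx
  · rintro rfl
    exact ⟨⟨0, 0, continuous_zero, HasCompactSupport.zero, continuous_zero,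
      HasCompactSupport.zero, by funext y; simp [Tstar]⟩,
      continuous_zero, HasCompactSupport.zero, fun _ => le_rfl⟩
end

section
/- Let H ⊆ Ω be an open invariant subset and suppose (Ω, T₁, T₂) satisfies the generalised matrix condition {(1 − (T₁)_*)f + (1 − (T₂)_*)g : f, g ∈ C_c(Ω, ℤ)} ∩ C_c(Ω, ℕ) = {0}. Suppose g ∈ C_c(H, ℤ) is such that (i) g = h + (1 − (T₁|_H)_*)f₁ + (1 − (T₂|_H)_*)f₂ for some h ∈ C_c(H, ℕ) and f₁, f₂ ∈ C_c(H, ℤ), and (ii) the extension by zero ι(g) ∈ C_c(Ω, ℤ) lies in {(1 − (T₁)_*)f + (1 − (T₂)_*)g' : f, g' ∈ C_c(Ω, ℤ)}. Then g ∈ {(1 − (T₁|_H)_*)f + (1 − (T₂|_H)_*)g' : f, g' ∈ C_c(H, ℤ)}. Equivalently, the homomorphism coker(1−(T₁|_H)_*, 1−(T₂|_H)_*) → coker(1−(T₁)_*, 1−(T₂)_*) induced by extension by zero has kernel meeting the image of C_c(H, ℕ) only in 0. -/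
/-!
Write `ι` for extension by zero from `H` to `Ω`. It is additive, it carries continuous compactly
supported functions to such functions because `H` is open, and it intertwines `(T|_H)_*` with `T_*`
because `H` is invariant (`extZero_Tstar`). Applying `ι` to
`g = h + (1 - (T₁|_H)_*) f₁ + (1 - (T₂|_H)_*) f₂` and subtracting a presentation of `ι g` as an
element of `MSet T₁ T₂` shows that `ι h` lies in `MSet T₁ T₂`. As `ι h` is also nonnegative, the
generalised matrix condition forces `ι h = 0`, hence `h = 0`, and then `f₁, f₂` themselves witness
that `g` belongs to the subgroup over `H`.

Since `Tstar` is a `finsum`, its additivity needs the fibres of a local homeomorphism to meet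
compact sets in finite sets (`finite_fiber_inter_support`).
-/

open Set Function

open Classical in
/-- Extension by zero of a function `↥H → ℤ` to a function `Ω → ℤ`. -/
noncomputable def extZero {Ω : Type*} (H : Set Ω) (f : ↥H → ℤ) : Ω → ℤ :=
  fun x => if hx : x ∈ H then f ⟨x, hx⟩ else 0

/-- A fibre of a local homeomorphism is closed and discrete, so it meets a compact support in a
finite set. -/
lemma finite_fiber_inter_support {X Y : Type*} [TopologicalSpace X] [TopologicalSpace Y]
    [T1Space Y] {T : X → Y} (hT : IsLocalHomeomorph T) {f : X → ℤ} (hf : HasCompactSupport f)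
    (y : Y) : (T ⁻¹' {y} ∩ support f).Finite := by
  have hsub : (T '' (tsupport f ∩ T ⁻¹' {y})).Subsingleton := by
    rintro _ ⟨a, ⟨-, ha⟩, rfl⟩ _ ⟨b, ⟨-, hb⟩, rfl⟩
    exact ha.trans hb.symm
  have hfin : (tsupport f ∩ T ⁻¹' {y}).Finite :=
    (hf.isCompact.inter_right (isClosed_singleton.preimage hT.continuous)).finite
      (hT.isLocalHomeomorphOn.isDiscrete_of_image hsub.isDiscrete)
  exact hfin.subset fun x hx => ⟨subset_tsupport f hx.2, hx.1⟩

lemma Tstar_add {X Y : Type*} [TopologicalSpace X] [TopologicalSpace Y]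
    [T1Space Y] {T : X → Y} (hT : IsLocalHomeomorph T) {f g : X → ℤ} (hf : HasCompactSupport f)
    (hg : HasCompactSupport g) : Tstar T (f + g) = Tstar T f + Tstar T g := by
  funext y
  exact finsum_mem_add_distrib' (finite_fiber_inter_support hT hf y)
    (finite_fiber_inter_support hT hg y)

lemma Tstar_sub {X Y : Type*} [TopologicalSpace X] [TopologicalSpace Y]
    [T1Space Y] {T : X → Y} (hT : IsLocalHomeomorph T) {f g : X → ℤ} (hf : HasCompactSupport f)
    (hg : HasCompactSupport g) : Tstar T (f - g) = Tstar T f - Tstar T g := by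
  rw [eq_sub_iff_add_eq, ← Tstar_add hT (hf.sub hg) hg, sub_add_cancel]

lemma extZero_eq_extend {X : Type*} (H : Set X) (f : ↥H → ℤ) :
    extZero H f = Subtype.val.extend f 0 := by
  funext x
  by_cases hx : x ∈ H
  · have := Subtype.val_injective.extend_apply f 0 (⟨x, hx⟩ : H)
    simp only at this
    simp [extZero, hx, this]
  · rw [Function.extend_apply' _ _ _ (by rintro ⟨a, rfl⟩; exact hx a.2)]
    simp [extZero, hx]

lemma extZero_coe {X : Type*} {H : Set X} (f : ↥H → ℤ) (x : H) : extZero H f x = f x := by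
  simp [extZero]

lemma extZero_of_notMem {X : Type*} {H : Set X} (f : ↥H → ℤ) {x : X} (hx : x ∉ H) :
    extZero H f x = 0 := by
  simp [extZero, hx]

lemma continuous_extZero {X : Type*} [TopologicalSpace X] [T2Space X] {H : Set X}
    (hH : IsOpen H) {f : ↥H → ℤ} (hc : Continuous f) (hs : HasCompactSupport f) :
    Continuous (extZero H f) := by
  rw [extZero_eq_extend]
  exact hs.continuous_extend_zero hH hc

lemma hasCompactSupport_extZero {X : Type*} [TopologicalSpace X] [T2Space X] {H : Set X}
    {f : ↥H → ℤ} (hs : HasCompactSupport f) : HasCompactSupport (extZero H f) := by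
  rw [extZero_eq_extend]
  exact hs.extend_zero continuous_subtype_val

/-- Extension by zero intertwines `(T|_H)_*` with `T_*`. For `y ∈ H` the fibre of `T` over `y`
lies in `H`; for `y ∉ H` it is disjoint from `H`. -/
lemma extZero_Tstar {X : Type*} {T : X → X} {H : Set X} (hm : Set.MapsTo T H H)
    (hinv : T ⁻¹' H ⊆ H) (f : ↥H → ℤ) :
    extZero H (Tstar (Set.MapsTo.restrict T H H hm) f) = Tstar T (extZero H f) := by
  funext y
  by_cases hy : y ∈ H
  · have himg : T ⁻¹' {y} = Subtype.val '' (Set.MapsTo.restrict T H H hm ⁻¹' {⟨y, hy⟩}) := by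
      ext x
      constructor
      · rintro rfl
        exact ⟨⟨x, hinv hy⟩, rfl, rfl⟩
      · rintro ⟨a, ha, rfl⟩
        exact congrArg Subtype.val ha
    rw [extZero_coe _ ⟨y, hy⟩, Tstar, Tstar, himg,
      finsum_mem_image Subtype.val_injective.injOn]
    simp only [extZero_coe]
  · rw [extZero_of_notMem _ hy, Tstar, finsum_mem_eq_zero_of_forall_eq_zero]
    rintro x rfl
    exact extZero_of_notMem _ fun hx => hy (hm hx)

lemma extZero_add {X : Type*} (H : Set X) (f g : ↥H → ℤ) :
    extZero H (f + g) = extZero H f + extZero H g := by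
  funext x
  by_cases hx : x ∈ H <;> simp [extZero, hx]

lemma extZero_sub {X : Type*} (H : Set X) (f g : ↥H → ℤ) :
    extZero H (f - g) = extZero H f - extZero H g := by
  funext x
  by_cases hx : x ∈ H <;> simp [extZero, hx]

/-- Let `H ⊆ Ω` be an open invariant subset and suppose
`(Ω, T₁, T₂)` satisfies the generalised matrix condition.  Suppose `g ∈ C_c(H, ℤ)` is
such that (i) `g = h + (1 − (T₁|_H)_*) f₁ + (1 − (T₂|_H)_*) f₂` with `h ∈ C_c(H, ℕ)`
and `f₁, f₂ ∈ C_c(H, ℤ)`, and (ii) the extension by zero `ι g` lies in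
`{(1 − (T₁)_*) f + (1 − (T₂)_*) g' : f, g' ∈ C_c(Ω, ℤ)}`.  Then
`g ∈ {(1 − (T₁|_H)_*) f + (1 − (T₂|_H)_*) g' : f, g' ∈ C_c(H, ℤ)}`. -/
theorem stmt13 {Ω : Type*} [TopologicalSpace Ω] [SecondCountableTopology Ω]
    [TotallyDisconnectedSpace Ω] [LocallyCompactSpace Ω] [T2Space Ω]
    (T₁ T₂ : Ω → Ω)
    (hs₁ : Function.Surjective T₁) (hs₂ : Function.Surjective T₂)
    (hl₁ : IsLocalHomeomorph T₁) (hl₂ : IsLocalHomeomorph T₂)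
    (hcomm : ∀ x, T₁ (T₂ x) = T₂ (T₁ x))
    (H : Set Ω) (hHo : IsOpen H)
    (hm₁ : Set.MapsTo T₁ H H) (hm₂ : Set.MapsTo T₂ H H)
    (hinv₁' : T₁ ⁻¹' H ⊆ H) (hinv₂' : T₂ ⁻¹' H ⊆ H)
    (hM : MSet T₁ T₂ ∩ CcNN Ω = {0})
    (g : ↥H → ℤ) (hgc : Continuous g) (hgs : HasCompactSupport g)
    (h : ↥H → ℤ) (hh : h ∈ CcNN ↥H)
    (f₁ f₂ : ↥H → ℤ)
    (hf₁c : Continuous f₁) (hf₁s : HasCompactSupport f₁)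
    (hf₂c : Continuous f₂) (hf₂s : HasCompactSupport f₂)
    (heq : g = h + (f₁ - Tstar (Set.MapsTo.restrict T₁ H H hm₁) f₁)
        + (f₂ - Tstar (Set.MapsTo.restrict T₂ H H hm₂) f₂))
    (hext : extZero H g ∈ MSet T₁ T₂) :
    g ∈ MSet (Set.MapsTo.restrict T₁ H H hm₁) (Set.MapsTo.restrict T₂ H H hm₂) := by
  obtain ⟨a, b, hac, has, hbc, hbs, hab⟩ := hext
  have hF₁ := hasCompactSupport_extZero hf₁s
  have hF₂ := hasCompactSupport_extZero hf₂s
  have hmem : extZero H h ∈ MSet T₁ T₂ := by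
    refine ⟨a - extZero H f₁, b - extZero H f₂, hac.sub (continuous_extZero hHo hf₁c hf₁s),
      has.sub hF₁, hbc.sub (continuous_extZero hHo hf₂c hf₂s), hbs.sub hF₂, ?_⟩
    rw [heq] at hab
    simp only [extZero_add, extZero_sub, extZero_Tstar hm₁ hinv₁', extZero_Tstar hm₂ hinv₂']
      at hab
    rw [Tstar_sub hl₁ has hF₁, Tstar_sub hl₂ hbs hF₂]
    linear_combination hab
  have hnn : extZero H h ∈ CcNN Ω := by
    refine ⟨continuous_extZero hHo hh.1 hh.2.1, hasCompactSupport_extZero hh.2.1, fun x => ?_⟩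
    by_cases hx : x ∈ H
    · exact (hh.2.2 ⟨x, hx⟩).trans_eq (extZero_coe h ⟨x, hx⟩).symm
    · exact (extZero_of_notMem h hx).ge
  have hzero : extZero H h = 0 := by
    have : extZero H h ∈ MSet T₁ T₂ ∩ CcNN Ω := ⟨hmem, hnn⟩
    rwa [hM] at this
  have h0 : h = 0 := by
    funext x
    rw [← extZero_coe h x, hzero]
    rfl
  refine ⟨f₁, f₂, hf₁c, hf₁s, hf₂c, hf₂s, ?_⟩
  rw [heq, h0, zero_add]
end
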